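/- arXiv:1805.04337 — 4 statements merged into one kernel-verified Lean document; each statement's English description precedes it below -/
import Mathlib

section
/- Let n ≥ 4 be even, ν = 2, c_W = n−1, h = n/2 − 1, and let c_R be an integer with 2 ≤ c_R ≤ n−1; set c := c_W + c_R − n = c_R − 1 and assume c ≥ 2. Then there exists K_0 such that for every K ≥ K_0 with c² dividing (c+2)K, there exists an (n, n−1, c_R, 2, n/2−1, 2^K, q) multi-version code with side information whose storage cost is log₂ q = (c+2)K/c² bits (this is the cost of Construction 1, which allocates K/c bits to version 2 at server i exactly when at least n−2 servers of H_i have received version 2, and the remaining (c+2)K/c² − K/c bits to version 1). -/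
open Finset

/-- The `h`-hop neighborhood `H_i = {i-h, …, i+h}` of server `i` on the ring `ZMod n`. -/
noncomputable def nbhd (n h : ℕ) (i : ZMod n) : Finset (ZMod n) :=
  (Finset.Icc (-(h : ℤ)) (h : ℤ)).image (fun d : ℤ => (i + (d : ZMod n)))

/-- The set `A_S(u)` of servers that received version `u` in state `S`. -/
def received (n ν : ℕ) [NeZero n] (S : ZMod n → Finset (Fin ν)) (u : Fin ν) :
    Finset (ZMod n) :=
  Finset.univ.filter (fun j => u ∈ S j)

/-- An `(n, c_W, c_R, ν, h, 2^K, q)` multi-version code with side information.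
Servers are indexed by `ZMod n`, versions by `Fin ν` (higher index = later version),
message values are `K`-bit strings `Fin K → Bool`, and stored symbols lie in `Fin q`.
The encoder of server `i` may depend only on the states of the servers in its
`h`-hop neighborhood and on the values of the versions that server `i` received;
the decoder for a set `T` of `c_R` servers may depend only on the symbols stored by
the servers of `T`, and must return the value of some version at least as late as the
latest complete version whenever a complete version exists (and `NULL`, i.e. `none`,
otherwise). -/
structure MVCode (n cW cR ν h K q : ℕ) [NeZero n] where
  enc : ZMod n → (ZMod n → Finset (Fin ν)) → (Fin ν → (Fin K → Bool)) → Fin q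
  dec : (ZMod n → Finset (Fin ν)) → Finset (ZMod n) → (ZMod n → Fin q) →
    Option (Fin K → Bool)
  enc_local_state : ∀ (i : ZMod n) (S S' : ZMod n → Finset (Fin ν))
      (W : Fin ν → Fin K → Bool),
    (∀ j ∈ nbhd n h i, S j = S' j) → enc i S W = enc i S' W
  enc_local_word : ∀ (i : ZMod n) (S : ZMod n → Finset (Fin ν))
      (W W' : Fin ν → Fin K → Bool),
    (∀ u ∈ S i, W u = W' u) → enc i S W = enc i S W'
  dec_local : ∀ (S : ZMod n → Finset (Fin ν)) (T : Finset (ZMod n))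
      (X X' : ZMod n → Fin q),
    (∀ j ∈ T, X j = X' j) → dec S T X = dec S T X'
  dec_correct : ∀ (S : ZMod n → Finset (Fin ν)) (W : Fin ν → Fin K → Bool)
      (T : Finset (ZMod n)), T.card = cR →
    (∃ u : Fin ν, cW ≤ (received n ν S u).card) →
    ∃ m : Fin ν, (∀ u : Fin ν, cW ≤ (received n ν S u).card → u ≤ m) ∧
      dec S T (fun j => enc j S W) = some (W m)
  dec_null : ∀ (S : ZMod n → Finset (Fin ν)) (W : Fin ν → Fin K → Bool)
      (T : Finset (ZMod n)), T.card = cR →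
    (∀ u : Fin ν, (received n ν S u).card < cW) →
    dec S T (fun j => enc j S W) = none

/-!
Both versions are read as polynomials of degree `< k = d t + e` over a large finite field, where
`d = c - 2`, and every server stores `t` field elements, so that a reader holds `(c + 1) t` of them.
A server that may treat version 2 as complete stores `t` values of `f₁ + X ^ k * (μ • r)`, where `r`
is the reduction of version 1 modulo `X ^ e` and `μ` a mixing scalar; the others store values of
version 1. A server that sees only itself lacking the other version stores low coefficients in place
of values.

The only server that server `i` may fail to see is its antipode, and the block of points used by
`i` is indexed by the set of servers that, as far as `i` knows, may lack version 2: those seen to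
lack it and the antipode. If version 2 is complete, either enough readers use the same interference
`μ • r`, and Reed–Solomon decoding of a polynomial of degree `< k + e` separates it from `f₁`, or
`r` can be computed from a server storing version 1 and removed. If version 2 is incomplete, at most
two readers can believe that it is complete. Two such readers use the same block of points but
different mixing scalars, so `f₁` cancels from their difference, which reveals `r`; the remaining
readers supply the rest of version 1.
-/

open Polynomial

theorem eq_zero_of_X_pow_dvd_of_eval_eq_zero {R κ : Type*} [CommRing R] [IsDomain R] {D : R[X]}
    {m : ℕ} {s : Finset κ} {v : κ → R} (hdvd : X ^ m ∣ D) (hinj : Set.InjOn v s)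
    (hne : ∀ j ∈ s, v j ≠ 0) (heval : ∀ j ∈ s, D.eval (v j) = 0)
    (hdeg : D.degree < ((m + #s : ℕ) : WithBot ℕ)) : D = 0 := by
  obtain ⟨E, rfl⟩ := hdvd
  have hE : E = 0 := by
    refine eq_zero_of_degree_lt_of_eval_index_eq_zero s hinj ?_ fun j hj => ?_
    · rw [degree_mul, degree_X_pow, Nat.cast_add] at hdeg
      exact lt_of_add_lt_add_left hdeg
    · simpa [hne j hj] using heval j hj
  rw [hE, mul_zero]

theorem eq_zero_of_add_X_pow_mul_eq_zero {R : Type*} [CommRing R] [IsDomain R] {D r : R[X]}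
    {k : ℕ} (hD : D.degree < k) (h : D + X ^ k * r = 0) : D = 0 := by
  refine eq_zero_of_dvd_of_degree_lt (p := X ^ k) ⟨-r, ?_⟩ (by rwa [degree_X_pow])
  rw [mul_neg, eq_neg_of_add_eq_zero_left h]

theorem degree_add_X_pow_mul_lt {R : Type*} [CommRing R] [IsDomain R] {D r : R[X]} {k e : ℕ}
    (hD : D.degree < k) (hr : r.degree < e) :
    (D + X ^ k * r).degree < ((k + e : ℕ) : WithBot ℕ) := by
  refine (degree_add_le _ _).trans_lt (max_lt (hD.trans_le ?_) ?_)
  · exact_mod_cast Nat.le_add_right k e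
  · rw [degree_mul, degree_X_pow, Nat.cast_add]
    exact WithBot.add_lt_add_left (WithBot.coe_ne_bot) hr

theorem degree_modByMonic_X_pow_lt {R : Type*} [CommRing R] [Nontrivial R] (f : R[X]) (e : ℕ) :
    (f %ₘ X ^ e).degree < e := by
  simpa using degree_modByMonic_lt f (monic_X_pow (R := R) e)

theorem eq_pair_of_card_erase_le_one {ι : Type*} [DecidableEq ι] {M : Finset ι} {a b : ι}
    (hab : a ≠ b) (hM : 2 ≤ #M) (ha : #(M.erase a) ≤ 1) (hb : #(M.erase b) ≤ 1) : M = {a, b} := by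
  have mem_of_card_erase {c : ι} (hc : #(M.erase c) ≤ 1) : c ∈ M := by
    by_contra hcM
    rw [erase_eq_of_notMem hcM] at hc
    omega
  refine (eq_of_subset_of_card_le ?_ ?_).symm
  · exact insert_subset (mem_of_card_erase ha) (singleton_subset_iff.mpr (mem_of_card_erase hb))
  · rw [card_erase_of_mem (mem_of_card_erase ha)] at ha
    rw [card_pair hab]
    omega

theorem insert_left_injective_of_card_le_one {ι : Type*} [DecidableEq ι] {M : Finset ι}
    (hM : #M ≤ 1) : Function.Injective fun a => insert a M := by
  intro a b hab
  have ha : a = b ∨ a ∈ M := mem_insert.mp ((Finset.ext_iff.mp hab a).mp (mem_insert_self a M))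
  have hb : b = a ∨ b ∈ M := mem_insert.mp ((Finset.ext_iff.mp hab b).mpr (mem_insert_self b M))
  grind [card_le_one]

section Blocks

variable {F κ : Type*} [Field F] {t : ℕ}

/-- The `t` values of a polynomial at the block of evaluation points with index `a`. -/
noncomputable def blockEval (x : κ × Fin t ↪ Fˣ) (a : κ) : F[X] →ₗ[F] Fin t → F :=
  LinearMap.pi fun l => leval (x (a, l) : F)

/-- The `t` lowest coefficients of a polynomial: the block of values at `0`, with multiplicity. -/
noncomputable def lowCoeffs (t : ℕ) : F[X] →ₗ[F] Fin t → F :=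
  LinearMap.pi fun l => lcoeff F l

theorem blockEval_eq_zero_iff {x : κ × Fin t ↪ Fˣ} {a : κ} {f : F[X]} :
    blockEval x a f = 0 ↔ ∀ l, f.eval (x (a, l) : F) = 0 :=
  funext_iff

theorem lowCoeffs_eq_zero_iff {f : F[X]} : lowCoeffs t f = 0 ↔ X ^ t ∣ f := by
  rw [X_pow_dvd_iff, funext_iff]
  exact Fin.forall_iff

theorem eq_zero_of_blockEval_eq_zero {ι : Type*} {x : κ × Fin t ↪ Fˣ} {D : F[X]} {m : ℕ}
    {V : Finset ι} {U : ι → κ} (hdvd : X ^ m ∣ D) (hU : Set.InjOn U V)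
    (heval : ∀ i ∈ V, blockEval x (U i) D = 0) (hdeg : D.degree < ((m + #V * t : ℕ) : WithBot ℕ)) :
    D = 0 := by
  refine eq_zero_of_X_pow_dvd_of_eval_eq_zero (s := V ×ˢ (univ : Finset (Fin t)))
    (v := fun j => (x (U j.1, j.2) : F)) hdvd ?_ (fun j _ => (x _).ne_zero) ?_ ?_
  · rintro ⟨i, l⟩ hi ⟨j, l'⟩ hj hij
    obtain ⟨hUij, hl⟩ := Prod.ext_iff.mp (x.injective (Units.ext hij))
    exact Prod.ext (hU (mem_product.mp hi).1 (mem_product.mp hj).1 hUij) hl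
  · exact fun j hj => blockEval_eq_zero_iff.mp (heval j.1 (mem_product.mp hj).1) j.2
  · rwa [card_product, card_univ, Fintype.card_fin]

end Blocks

/-- The data of a superposition code in which server `i` sees the state of every server except
`blind i`. Messages are polynomials of degree less than `k` over `F`, servers store `t` field
elements, and `e` coefficients of the first message may be superposed on the second. Blocks of
evaluation points and mixing scalars are both indexed by sets of servers. -/
structure SuperpositionScheme (ι F : Type*) [Field F] (t k e : ℕ) where
  blind : ι → ι
  blind_injective : Function.Injective blind
  blind_ne : ∀ i, blind i ≠ i
  point : Finset ι × Fin t ↪ Fˣ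
  scalar : Finset ι ↪ Fˣ
  e_le_t : e ≤ t
  t_le_k : t ≤ k

namespace SuperpositionScheme

variable {ι F : Type*} [DecidableEq ι] [Field F] {t k e : ℕ} (P : SuperpositionScheme ι F t k e)

/-- The scalar with which server `i` superposes the first message, when it sees `M` lacking the
second message and `N` lacking the first. -/
def mixCoeff (i : ι) (M N : Finset ι) : F :=
  if i ∉ N ∧ M.Nonempty ∧ Disjoint M N ∧ #N ≤ 1 then P.scalar M else 0

/-- The block stored at server `i` when it sees `M` lacking the second message `f₁` and `N` lacking
the first message `f₀`. -/
noncomputable def symbol (i : ι) (M N : Finset ι) (f₀ f₁ : F[X]) : Fin t → F :=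
  if i ∉ M ∧ #M ≤ 1 then
    if N = {i} then lowCoeffs t f₁
    else blockEval P.point (insert (P.blind i) M)
      (f₁ + X ^ k * (P.mixCoeff i M N • (f₀ %ₘ X ^ e)))
  else if i ∈ N then 0
  else if M = {i} then lowCoeffs t f₀
  else blockEval P.point {i} f₀

theorem symbol_sub (i : ι) (M N : Finset ι) (f₀ f₁ g₀ g₁ : F[X]) :
    P.symbol i M N (f₀ - g₀) (f₁ - g₁) = P.symbol i M N f₀ f₁ - P.symbol i M N g₀ g₁ := by
  unfold symbol
  split_ifs
  · exact map_sub _ _ _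
  · rw [← map_sub, sub_modByMonic, smul_sub]
    congr 1
    ring
  · exact (sub_zero 0).symm
  · exact map_sub _ _ _
  · exact map_sub _ _ _

theorem symbol_congr {i : ι} {M N : Finset ι} {f₀ f₁ g₀ g₁ : F[X]} (h₀ : i ∉ N → f₀ = g₀)
    (h₁ : i ∉ M → f₁ = g₁) : P.symbol i M N f₀ f₁ = P.symbol i M N g₀ g₁ := by
  by_cases hN : i ∈ N
  · simp +contextual [symbol, mixCoeff, hN, h₁]
  · simp +contextual [symbol, h₀ hN, h₁]

/-! ### Decoding the second message -/

theorem insert_blind_erase (i : ι) (M : Finset ι) :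
    insert (P.blind i) (M.erase (P.blind i)) = insert (P.blind i) M := by
  grind

theorem card_le_card_filter_blind_notMem_add (T A : Finset ι) :
    #T ≤ #{i ∈ T | P.blind i ∉ A} + #A := by
  have hpart := card_filter_add_card_filter_not (s := T) (fun i => P.blind i ∈ A)
  have hA : #{i ∈ T | P.blind i ∈ A} ≤ #A :=
    card_le_card_of_injOn P.blind (fun i hi => (mem_filter.mp hi).2) P.blind_injective.injOn
  omega

theorem X_pow_dvd_of_symbol_singleton_eq_zero {i : ι} {N : Finset ι} {D₀ D₁ : F[X]} (hi : i ∉ N)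
    (h : P.symbol i {i} N D₀ D₁ = 0) : X ^ e ∣ D₀ :=
  (pow_dvd_pow X P.e_le_t).trans <| lowCoeffs_eq_zero_iff.mp <| by simpa [symbol, hi] using h

/-- The servers counted by `hlow` store low coefficients of `D₁` itself, so together they provide
only one block of vanishing values, the one at `0`. -/
theorem eq_zero_of_common_interference {M L W : Finset ι} {D₀ D₁ r : F[X]} {blocks slack : ℕ}
    (hM : #M ≤ 1) (hWM : Disjoint W M) (hD₁ : D₁.degree < k)
    (h : ∀ i ∈ W, P.symbol i (M.erase (P.blind i)) (L.erase (P.blind i)) D₀ D₁ = 0)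
    (hr : ∀ i ∈ W, L.erase (P.blind i) ≠ {i} →
      P.mixCoeff i (M.erase (P.blind i)) (L.erase (P.blind i)) • (D₀ %ₘ X ^ e) = r)
    (hlow : #{i ∈ W | L.erase (P.blind i) = {i}} ≤ slack + 1) (hcard : blocks + slack ≤ #W)
    (hdeg : (D₁ + X ^ k * r).degree < ((blocks * t : ℕ) : WithBot ℕ)) : D₁ = 0 := by
  have hsymbol (i : ι) (hi : i ∈ W) :
      i ∉ M.erase (P.blind i) ∧ #(M.erase (P.blind i)) ≤ 1 :=
    ⟨fun hiM => disjoint_left.mp hWM hi (mem_of_mem_erase hiM),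
      (card_le_card (erase_subset _ _)).trans hM⟩
  have heval : ∀ i ∈ ({i ∈ W | L.erase (P.blind i) ≠ {i}} : Finset ι),
      blockEval P.point (insert (P.blind i) M) (D₁ + X ^ k * r) = 0 := by
    intro i hi
    obtain ⟨hiW, hiL⟩ := mem_filter.mp hi
    have hsym := h i hiW
    rwa [symbol, if_pos (hsymbol i hiW), if_neg hiL, hr i hiW hiL, insert_blind_erase] at hsym
  have hinj : Function.Injective fun i => insert (P.blind i) M :=
    (insert_left_injective_of_card_le_one hM).comp P.blind_injective
  have hpart : #{i ∈ W | L.erase (P.blind i) = {i}} + #{i ∈ W | L.erase (P.blind i) ≠ {i}} = #W :=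
    card_filter_add_card_filter_not _
  suffices hsum : D₁ + X ^ k * r = 0 from eq_zero_of_add_X_pow_mul_eq_zero hD₁ hsum
  obtain hnone | ⟨j, hj⟩ := eq_empty_or_nonempty {i ∈ W | L.erase (P.blind i) = {i}}
  · refine eq_zero_of_blockEval_eq_zero (m := 0) (by simp) hinj.injOn heval (hdeg.trans_le ?_)
    rw [hnone, card_empty] at hpart
    have : blocks ≤ #{i ∈ W | L.erase (P.blind i) ≠ {i}} := by omega
    rw [zero_add]
    gcongr
  · obtain ⟨hjW, hjL⟩ := mem_filter.mp hj
    have hlowD₁ : X ^ t ∣ D₁ := by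
      have hsym := h j hjW
      rwa [symbol, if_pos (hsymbol j hjW), if_pos hjL, lowCoeffs_eq_zero_iff] at hsym
    refine eq_zero_of_blockEval_eq_zero
      (dvd_add hlowD₁ ((pow_dvd_pow X P.t_le_k).mul_right r)) hinj.injOn heval
      (hdeg.trans_le ?_)
    have : blocks ≤ 1 + #{i ∈ W | L.erase (P.blind i) ≠ {i}} := by omega
    rw [← one_add_mul]
    gcongr

theorem filter_erase_blind_eq_singleton_subset (W L : Finset ι) :
    {i ∈ W | L.erase (P.blind i) = {i}} ⊆ L := fun i hi =>
  mem_of_mem_erase ((mem_filter.mp hi).2 ▸ mem_singleton_self i)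

theorem card_filter_erase_blind_eq_singleton_le_two (W L : Finset ι) :
    #{i ∈ W | L.erase (P.blind i) = {i}} ≤ 2 := by
  obtain hnone | ⟨j, hj⟩ := eq_empty_or_nonempty {i ∈ W | L.erase (P.blind i) = {i}}
  · simp [hnone]
  · have hL : #L - 1 ≤ 1 := by
      simpa [(mem_filter.mp hj).2] using pred_card_le_card_erase (s := L) (a := P.blind j)
    have := card_le_card (P.filter_erase_blind_eq_singleton_subset W L)
    omega

theorem mixCoeff_ne_zero_iff {i : ι} {M N : Finset ι} :
    P.mixCoeff i M N ≠ 0 ↔ i ∉ N ∧ M.Nonempty ∧ Disjoint M N ∧ #N ≤ 1 := by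
  simp [mixCoeff]

/-- If the server `a` missing the second message is not read, enough servers of `T` carry the same
interference: none when two servers lack the first message, `P.scalar {a}` times the overlap
otherwise. -/
theorem eq_zero_of_missing_server_notMem {d : ℕ} {a : ι} {L T : Finset ι} {D₀ D₁ : F[X]}
    (hk : k = d * t + e) (haT : a ∉ T) (haL : a ∉ L) (hL : #L ≤ 2) (hT : #T = d + 3)
    (hD₁ : D₁.degree < k)
    (h : ∀ i ∈ T, P.symbol i (Finset.erase {a} (P.blind i)) (L.erase (P.blind i)) D₀ D₁ = 0) :
    D₁ = 0 := by
  have het := P.e_le_t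
  have hM : #{a} ≤ 1 := (card_singleton a).le
  have hdisj (p : ι → Prop) [DecidablePred p] : Disjoint {i ∈ T | p i} {a} :=
    disjoint_singleton_right.mpr fun ha => haT (mem_filter.mp ha).1
  obtain hL2 | hL1 : #L = 2 ∨ #L ≤ 1 := by omega
  · have hview : ∀ i ∈ ({i ∈ T | P.blind i ∉ L} : Finset ι), L.erase (P.blind i) = L :=
      fun i hi => erase_eq_of_notMem (mem_filter.mp hi).2
    refine P.eq_zero_of_common_interference (r := 0) (blocks := d + 1) (slack := 0) hM
      (hdisj fun i => P.blind i ∉ L) hD₁ (fun i hi => h i (mem_filter.mp hi).1)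
      (fun i hi _ => ?_) ?_ ?_ ?_
    · simp [mixCoeff, hview i hi, hL2]
    · rw [filter_false_of_mem fun i hi hiL => ?_, card_empty]
      · exact zero_le_one
      · simpa [hL2] using congrArg card ((hview i hi).symm.trans hiL)
    · have := P.card_le_card_filter_blind_notMem_add T L
      omega
    · rw [mul_zero, add_zero]
      refine hD₁.trans_le (Nat.cast_le.mpr ?_)
      rw [hk, add_one_mul]
      omega
  · have hr : ((P.scalar {a} : F) • (D₀ %ₘ X ^ e)).degree < e :=
      (degree_smul_le _ _).trans_lt (degree_modByMonic_X_pow_lt D₀ e)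
    refine P.eq_zero_of_common_interference (r := (P.scalar {a} : F) • (D₀ %ₘ X ^ e))
      (blocks := d + 2) (slack := 0) hM (hdisj fun i => P.blind i ∉ ({a} : Finset ι)) hD₁
      (fun i hi => h i (mem_filter.mp hi).1) (fun i hi hiL => ?_) ?_ ?_ ?_
    · have hview : Finset.erase {a} (P.blind i) = {a} := erase_eq_of_notMem (mem_filter.mp hi).2
      have hiL' : i ∉ L.erase (P.blind i) := fun hmem => hiL <| eq_singleton_iff_unique_mem.mpr
        ⟨hmem, fun j hj => card_le_one.mp hL1 j (mem_of_mem_erase hj) i (mem_of_mem_erase hmem)⟩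
      rw [hview, mixCoeff, if_pos]
      exact ⟨hiL', singleton_nonempty a,
        disjoint_singleton_left.mpr fun ha => haL (mem_of_mem_erase ha),
        (card_le_card (erase_subset _ _)).trans hL1⟩
    · exact (card_le_card (P.filter_erase_blind_eq_singleton_subset _ L)).trans (by omega)
    · have := P.card_le_card_filter_blind_notMem_add T {a}
      omega
    · refine (degree_add_X_pow_mul_lt hD₁ hr).trans_le (Nat.cast_le.mpr ?_)
      rw [hk, add_mul]
      omega

theorem eq_zero_of_second_complete {d : ℕ} {M L T : Finset ι} {D₀ D₁ : F[X]}
    (hk : k = d * t + e) (hM : #M ≤ 1) (hT : #T = d + 3) (hD₁ : D₁.degree < k)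
    (h : ∀ i ∈ T, P.symbol i (M.erase (P.blind i)) (L.erase (P.blind i)) D₀ D₁ = 0) :
    D₁ = 0 := by
  have het := P.e_le_t
  by_cases hclean : ∀ i ∈ T \ M,
      P.mixCoeff i (M.erase (P.blind i)) (L.erase (P.blind i)) • (D₀ %ₘ X ^ e) = 0
  · refine P.eq_zero_of_common_interference (r := 0) (blocks := d + 1) (slack := 1) hM
      sdiff_disjoint hD₁ (fun i hi => h i (mem_sdiff.mp hi).1) (fun i hi _ => hclean i hi)
      (P.card_filter_erase_blind_eq_singleton_le_two _ L) ?_ ?_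
    · have := le_card_sdiff M T
      omega
    · rw [mul_zero, add_zero]
      refine hD₁.trans_le (Nat.cast_le.mpr ?_)
      rw [hk, add_one_mul]
      omega
  · push Not at hclean
    obtain ⟨j, -, hj⟩ := hclean
    obtain ⟨hcoeff, hD₀⟩ := smul_ne_zero_iff.mp hj
    obtain ⟨-, ⟨a, ha⟩, hdisj, hN⟩ := P.mixCoeff_ne_zero_iff.mp hcoeff
    obtain rfl : M = {a} := eq_singleton_iff_unique_mem.mpr
      ⟨mem_of_mem_erase ha, fun b hb => card_le_one.mp hM b hb a (mem_of_mem_erase ha)⟩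
    have haL : a ∉ L := fun haL =>
      disjoint_left.mp hdisj ha (mem_erase.mpr ⟨ne_of_mem_erase ha, haL⟩)
    have haT : a ∉ T := fun haT => hD₀ <| by
      have hsym := h a haT
      rw [erase_eq_of_notMem (by simpa using P.blind_ne a)] at hsym
      exact (modByMonic_eq_zero_iff_dvd (monic_X_pow e)).mpr <|
        P.X_pow_dvd_of_symbol_singleton_eq_zero (fun hmem => haL (mem_of_mem_erase hmem)) hsym
    have hL := pred_card_le_card_erase (s := L) (a := P.blind j)
    exact P.eq_zero_of_missing_server_notMem hk haT haL (by omega) hT hD₁ h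

/-! ### Decoding the first message -/

theorem symbol_eq_blockEval_singleton {i : ι} {M N : Finset ι} {f₀ f₁ : F[X]} (hi : i ∉ N)
    (hM : 2 ≤ #M) : P.symbol i M N f₀ f₁ = blockEval P.point {i} f₀ := by
  have hne : M ≠ {i} := fun heq => by simp [heq] at hM
  rw [symbol, if_neg (by omega), if_neg hi, if_neg hne]

theorem symbol_eq_blockEval_blind_pair {i j : ι} {L : Finset ι} {D₀ D₁ : F[X]} (hij : i ≠ j)
    (hij' : i ≠ P.blind j) (hiL : i ∉ L) (hL : #L ≤ 1) :
    P.symbol i {P.blind j} (L.erase (P.blind i)) D₀ D₁ =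
      blockEval P.point {P.blind i, P.blind j} (D₁ + X ^ k *
        ((if P.blind j ∈ L then 0 else (P.scalar {P.blind j} : F)) • (D₀ %ₘ X ^ e))) := by
  have hcard : #(L.erase (P.blind i)) ≤ 1 := (card_le_card (erase_subset _ _)).trans hL
  have hne : L.erase (P.blind i) ≠ {i} :=
    fun heq => hiL (mem_of_mem_erase (heq ▸ mem_singleton_self i))
  have hblind := P.blind_injective.ne hij
  simp [symbol, mixCoeff, hij', hne, hiL, hcard, hblind.symm, ite_not]

/-- Unless `i` or `j` already sees itself as the only server lacking the second message, both
evaluate at the same block `{P.blind i, P.blind j}`: the second message cancels from their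
difference, and their mixing coefficients differ. -/
theorem X_pow_dvd_of_symbol_blind_pair_eq_zero {i j : ι} {L : Finset ι} {D₀ D₁ : F[X]}
    (hij : i ≠ j) (hiL : i ∉ L) (hjL : j ∉ L) (hL : #L ≤ 1)
    (hi : P.symbol i {P.blind j} (L.erase (P.blind i)) D₀ D₁ = 0)
    (hj : P.symbol j {P.blind i} (L.erase (P.blind j)) D₀ D₁ = 0) : X ^ e ∣ D₀ := by
  obtain hij' | hij' := eq_or_ne i (P.blind j)
  · rw [← hij'] at hi
    exact P.X_pow_dvd_of_symbol_singleton_eq_zero (fun hmem => hiL (mem_of_mem_erase hmem)) hi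
  obtain hji | hji := eq_or_ne j (P.blind i)
  · rw [← hji] at hj
    exact P.X_pow_dvd_of_symbol_singleton_eq_zero (fun hmem => hjL (mem_of_mem_erase hmem)) hj
  have hblind := P.blind_injective.ne hij
  rw [P.symbol_eq_blockEval_blind_pair hij hij' hiL hL] at hi
  rw [P.symbol_eq_blockEval_blind_pair hij.symm hji hjL hL, pair_comm] at hj
  set ci : F := if P.blind j ∈ L then 0 else P.scalar {P.blind j} with hci
  set cj : F := if P.blind i ∈ L then 0 else P.scalar {P.blind i} with hcj
  have hcoeff : ci - cj ≠ 0 := by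
    rw [hci, hcj, sub_ne_zero]
    split_ifs with hjmem himem himem
    · exact absurd (card_le_one.mp hL _ himem _ hjmem) hblind
    · exact (P.scalar _).ne_zero.symm
    · exact (P.scalar _).ne_zero
    · exact fun heq => hblind.symm (singleton_injective (P.scalar.injective (Units.ext heq)))
  have hsub :
      blockEval P.point {P.blind i, P.blind j} (X ^ k * ((ci - cj) • (D₀ %ₘ X ^ e))) = 0 := by
    rw [sub_smul, mul_sub, ← add_sub_add_left_eq_sub _ _ D₁, map_sub, hi, hj, sub_zero]
  have hdeg : (X ^ k * ((ci - cj) • (D₀ %ₘ X ^ e))).degree < ((k + 1 * t : ℕ) : WithBot ℕ) := by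
    rw [degree_mul, degree_X_pow, Nat.cast_add, one_mul]
    refine WithBot.add_lt_add_left WithBot.coe_ne_bot ((degree_smul_le _ _).trans_lt ?_)
    exact (degree_modByMonic_X_pow_lt D₀ e).trans_le (Nat.cast_le.mpr P.e_le_t)
  have hzero : X ^ k * ((ci - cj) • (D₀ %ₘ X ^ e)) = 0 :=
    eq_zero_of_blockEval_eq_zero (V := {()}) (U := fun _ => {P.blind i, P.blind j})
      (dvd_mul_right _ _) (by simp) (fun _ _ => hsub) hdeg
  rw [← modByMonic_eq_zero_iff_dvd (monic_X_pow e)]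
  simpa [hcoeff] using hzero

theorem card_le_card_filter_two_le_card_erase_blind_add_two {M : Finset ι} (T : Finset ι)
    (hM : 2 ≤ #M) : #T ≤ #{i ∈ T | 2 ≤ #(M.erase (P.blind i))} + 2 := by
  obtain hM2 | hM3 := hM.eq_or_lt
  · have hsees : {i ∈ T | P.blind i ∉ M} ⊆ {i ∈ T | 2 ≤ #(M.erase (P.blind i))} :=
      monotone_filter_right _ fun i _ hiM => by rwa [erase_eq_of_notMem hiM]
    have := card_le_card hsees
    have := P.card_le_card_filter_blind_notMem_add T M
    omega
  · rw [filter_true_of_mem fun i _ => ?_]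
    · exact Nat.le_add_right _ _
    · have := pred_card_le_card_erase (s := M) (a := P.blind i)
      omega

theorem eq_zero_of_only_first_complete {d : ℕ} {M L T : Finset ι} {D₀ D₁ : F[X]}
    (hk : k = d * t + e) (hM : 2 ≤ #M) (hL : #L ≤ 1) (hT : #T = d + 3) (hD₀ : D₀.degree < k)
    (h : ∀ i ∈ T, P.symbol i (M.erase (P.blind i)) (L.erase (P.blind i)) D₀ D₁ = 0) :
    D₀ = 0 := by
  have het := P.e_le_t
  have heval : ∀ i ∈ ({i ∈ T \ L | 2 ≤ #(M.erase (P.blind i))} : Finset ι),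
      blockEval P.point {i} D₀ = 0 := by
    intro i hi
    obtain ⟨hiTL, hcard⟩ := mem_filter.mp hi
    obtain ⟨hiT, hiL⟩ := mem_sdiff.mp hiTL
    rw [← h i hiT, P.symbol_eq_blockEval_singleton (fun hmem => hiL (mem_of_mem_erase hmem)) hcard]
  have hpart : #{i ∈ T \ L | 2 ≤ #(M.erase (P.blind i))} +
      #{i ∈ T \ L | ¬ 2 ≤ #(M.erase (P.blind i))} = #(T \ L) := card_filter_add_card_filter_not _
  have hTL := le_card_sdiff L T
  obtain hfew | hmany := le_or_gt #{i ∈ T \ L | ¬ 2 ≤ #(M.erase (P.blind i))} 1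
  · refine eq_zero_of_blockEval_eq_zero (m := 0) (by simp) singleton_injective.injOn heval
      (hD₀.trans_le (Nat.cast_le.mpr ?_))
    have hcard : d + 1 ≤ #{i ∈ T \ L | 2 ≤ #(M.erase (P.blind i))} := by omega
    calc k ≤ 0 + (d + 1) * t := by rw [hk, add_one_mul]; omega
      _ ≤ _ := by gcongr
  · obtain ⟨i, hi, j, hj, hij⟩ := one_lt_card.mp hmany
    obtain ⟨hiTL, hiM⟩ := mem_filter.mp hi
    obtain ⟨hjTL, hjM⟩ := mem_filter.mp hj
    obtain ⟨hiT, hiL⟩ := mem_sdiff.mp hiTL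
    obtain ⟨hjT, hjL⟩ := mem_sdiff.mp hjTL
    have hblind := P.blind_injective.ne hij
    have hMij := eq_pair_of_card_erase_le_one hblind hM (by omega) (by omega)
    have hdvd : X ^ e ∣ D₀ := by
      refine P.X_pow_dvd_of_symbol_blind_pair_eq_zero (D₁ := D₁) hij hiL hjL hL ?_ ?_
      · simpa [hMij, hblind] using h i hiT
      · simpa [hMij, hblind.symm, pair_comm (P.blind i)] using h j hjT
    have hcard : d ≤ #{i ∈ T \ L | 2 ≤ #(M.erase (P.blind i))} := by
      have := P.card_le_card_filter_two_le_card_erase_blind_add_two (T \ L) hM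
      omega
    refine eq_zero_of_blockEval_eq_zero hdvd singleton_injective.injOn heval
      (hD₀.trans_le (Nat.cast_le.mpr ?_))
    calc k = e + d * t := by rw [hk, add_comm]
      _ ≤ _ := by gcongr

end SuperpositionScheme

/-! ### Codes from schemes -/

theorem MVCode.nonempty_of_decodable {n cW cR ν h K q : ℕ} [NeZero n]
    (enc : ZMod n → (ZMod n → Finset (Fin ν)) → (Fin ν → Fin K → Bool) → Fin q)
    (hstate : ∀ i S S' W, (∀ j ∈ nbhd n h i, S j = S' j) → enc i S W = enc i S' W)
    (hword : ∀ i S W W', (∀ u ∈ S i, W u = W' u) → enc i S W = enc i S W')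
    (hdec : ∀ S m, IsGreatest {u | cW ≤ #(received n ν S u)} m → ∀ T, #T = cR →
      ∀ W W', (∀ j ∈ T, enc j S W = enc j S W') → W m = W' m) :
    Nonempty (MVCode n cW cR ν h K q) := by
  classical
  let Explains (S : ZMod n → Finset (Fin ν)) (T : Finset (ZMod n)) (X : ZMod n → Fin q)
      (v : Fin K → Bool) : Prop :=
    ∃ m, IsGreatest {u | cW ≤ #(received n ν S u)} m ∧
      ∃ W : Fin ν → Fin K → Bool, (∀ j ∈ T, enc j S W = X j) ∧ W m = v
  refine ⟨⟨enc, fun S T X => if hv : ∃ v, Explains S T X v then some hv.choose else none,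
    hstate, hword, fun S T X X' hX => ?_, fun S W T hT hcomplete => ?_, fun S W T _ hnone => ?_⟩⟩
  · have hExplains : Explains S T X = Explains S T X' := by
      ext v
      simp +contextual only [Explains, hX]
    simp only [hExplains]
  · obtain ⟨u, hu⟩ := hcomplete
    obtain ⟨m, hm⟩ : ∃ m, IsGreatest {u | cW ≤ #(received n ν S u)} m :=
      Set.exists_max_image _ id (Set.toFinite _) ⟨u, hu⟩
    have hv : ∃ v, Explains S T (fun j => enc j S W) v := ⟨W m, m, hm, W, fun _ _ => rfl, rfl⟩
    obtain ⟨m', hm', W', hW', hval⟩ := hv.choose_spec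
    obtain rfl := hm'.unique hm
    exact ⟨m', hm.2, by rw [dif_pos hv, ← hval, hdec S m' hm T hT W' W hW']⟩
  · exact dif_neg fun ⟨_, m, hm, _⟩ => (hnone m).not_ge hm.1

theorem le_card_received_iff {n ν : ℕ} [NeZero n] (S : ZMod n → Finset (Fin ν)) (u : Fin ν) :
    n - 1 ≤ #(received n ν S u) ↔ #(received n ν S u)ᶜ ≤ 1 := by
  have := card_compl_add_card (received n ν S u)
  rw [ZMod.card] at this
  omega

theorem mem_nbhd_of_ne_antipode {n h : ℕ} [NeZero n] (hn : n ≤ 2 * h + 2) {i j : ZMod n}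
    (hj : j ≠ i + (h + 1 : ℕ)) : j ∈ nbhd n h i := by
  have hlt := ZMod.val_lt (j - i)
  have hne : (j - i).val ≠ h + 1 := fun heq => hj (by simp [← heq])
  refine mem_image.mpr ?_
  obtain hle | hgt := le_or_gt (j - i).val h
  · exact ⟨(j - i).val, mem_Icc.mpr (by omega), by simp⟩
  · exact ⟨(j - i).val - n, mem_Icc.mpr (by omega), by simp⟩

theorem SuperpositionScheme.nonempty_mvCode {n h d t k e K q : ℕ} [NeZero n] {F : Type*} [Field F]
    (P : SuperpositionScheme (ZMod n) F t k e) (hview : ∀ i j, j ≠ P.blind i → j ∈ nbhd n h i)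
    (hk : k = d * t + e) (α : (Fin K → Bool) ↪ degreeLT F k) (β : (Fin t → F) ↪ Fin q) :
    Nonempty (MVCode n (n - 1) (d + 3) 2 h K q) := by
  let lack (i : ZMod n) (S : ZMod n → Finset (Fin 2)) (u : Fin 2) : Finset (ZMod n) :=
    (received n 2 S u)ᶜ.erase (P.blind i)
  refine MVCode.nonempty_of_decodable
    (fun i S W => β (P.symbol i (lack i S 1) (lack i S 0) (α (W 0)) (α (W 1)))) ?_ ?_ ?_
  · intro i S S' W hS
    have hlack (u : Fin 2) : lack i S u = lack i S' u := by
      ext j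
      simp +contextual [lack, received, hS, hview i j]
    simp only [hlack]
  · intro i S W W' hW
    have hmem (u : Fin 2) (hu : i ∉ lack i S u) : α (W u) = α (W' u) := by
      rw [hW u]
      simpa [lack, received, (P.blind_ne i).symm] using hu
    exact congrArg β (P.symbol_congr (fun h₀ => by rw [hmem 0 h₀]) fun h₁ => by rw [hmem 1 h₁])
  · intro S m hm T hT W W' hWW'
    have hdiff : ∀ i ∈ T, P.symbol i (lack i S 1) (lack i S 0)
        (α (W 0) - α (W' 0)) (α (W 1) - α (W' 1)) = 0 := fun i hi => by
      rw [symbol_sub, β.injective (hWW' i hi), sub_self]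
    have hdeg (u : Fin 2) : ((α (W u) : F[X]) - α (W' u)).degree < k :=
      mem_degreeLT.mp ((degreeLT F k).sub_mem (α (W u)).2 (α (W' u)).2)
    have hcard : #(received n 2 S m)ᶜ ≤ 1 := (le_card_received_iff S m).mp hm.1
    suffices (α (W m) : F[X]) - α (W' m) = 0 from
      α.injective (Subtype.ext (sub_eq_zero.mp this))
    obtain rfl | rfl : m = 0 ∨ m = 1 := by omega
    · have hincomplete : 2 ≤ #(received n 2 S 1)ᶜ := by
        by_contra! hlt
        exact absurd (hm.2 ((le_card_received_iff S 1).mpr (by omega))) (by decide)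
      exact P.eq_zero_of_only_first_complete hk hincomplete hcard hT (hdeg 0) hdiff
    · exact P.eq_zero_of_second_complete hk hcard hT (hdeg 1) hdiff

theorem SuperpositionScheme.exists_blind_eq {ι F : Type*} [Fintype ι] [Field F] [Fintype F]
    {t k e : ℕ} {blind : ι → ι} (hinj : Function.Injective blind) (hne : ∀ i, blind i ≠ i)
    (ht : 0 < t) (het : e ≤ t) (htk : t ≤ k) (hcard : 2 ^ Fintype.card ι * t < Fintype.card F) :
    ∃ P : SuperpositionScheme ι F t k e, P.blind = blind := by
  classical
  obtain ⟨point⟩ : Nonempty (Finset ι × Fin t ↪ Fˣ) := by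
    refine Function.Embedding.nonempty_of_card_le ?_
    rw [Fintype.card_prod, Fintype.card_finset, Fintype.card_fin, Fintype.card_units]
    exact Nat.le_sub_one_of_lt hcard
  exact ⟨⟨blind, hinj, hne, point, (Function.Embedding.sectL _ ⟨0, ht⟩).trans point, het, htk⟩, rfl⟩

theorem MVCode.nonempty_of_card_field {n h d t e K q : ℕ} [NeZero n] (F : Type*) [Field F]
    [Fintype F] (hh : h + 1 < n) (hn : n ≤ 2 * h + 2) (ht : 0 < t) (het : e ≤ t)
    (htk : t ≤ d * t + e) (hpoints : 2 ^ n * t < Fintype.card F)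
    (hK : 2 ^ K ≤ Fintype.card F ^ (d * t + e)) (hq : Fintype.card F ^ t ≤ q) :
    Nonempty (MVCode n (n - 1) (d + 3) 2 h K q) := by
  have hshift : ((h + 1 : ℕ) : ZMod n) ≠ 0 := by
    rw [Ne, ZMod.natCast_eq_zero_iff]
    exact Nat.not_dvd_of_pos_of_lt h.succ_pos hh
  obtain ⟨P, hP⟩ := SuperpositionScheme.exists_blind_eq (F := F)
    (add_left_injective ((h + 1 : ℕ) : ZMod n)) (fun i => by simpa using hshift) ht het htk
    (by rwa [ZMod.card])
  obtain ⟨α⟩ : Nonempty ((Fin K → Bool) ↪ (Fin (d * t + e) → F)) :=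
    Function.Embedding.nonempty_of_card_le (by simpa using hK)
  obtain ⟨β⟩ : Nonempty ((Fin t → F) ↪ Fin q) :=
    Function.Embedding.nonempty_of_card_le (by simpa using hq)
  exact P.nonempty_mvCode (fun i j hj => mem_nbhd_of_ne_antipode hn (by rwa [hP] at hj)) rfl
    (α.trans (degreeLTEquiv F (d * t + e)).symm.toEquiv.toEmbedding) β

theorem exists_rate_parameters (d : ℕ) :
    ∃ t e, 0 < t ∧ e ≤ t ∧ t ≤ d * t + e ∧ (d + 4) * (d * t + e) = (d + 2) ^ 2 * t ∧
      ∀ K, (d + 2) ^ 2 ∣ (d + 4) * K → d * t + e ∣ K := by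
  obtain ⟨k, t, hcop, hk, ht⟩ := Nat.exists_coprime ((d + 2) ^ 2) (d + 4)
  set g := ((d + 2) ^ 2).gcd (d + 4)
  have hg : 0 < g := Nat.gcd_pos_of_pos_right _ (by omega)
  have htpos : 0 < t := Nat.pos_of_mul_pos_right (ht ▸ (by omega : 0 < d + 4))
  have hrate : (d + 4) * k = (d + 2) ^ 2 * t := by
    rw [hk, ht]
    ring
  obtain ⟨e, rfl⟩ : ∃ e, k = d * t + e := Nat.exists_eq_add_of_le (by nlinarith)
  refine ⟨t, e, htpos, by nlinarith, by nlinarith, hrate, fun K hdvd => ?_⟩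
  rw [hk, ht, mul_right_comm] at hdvd
  exact hcop.dvd_of_dvd_mul_left (Nat.dvd_of_mul_dvd_mul_right hg hdvd)

theorem construction_one_general (n h c : ℕ) [NeZero n] (hh : h + 1 < n) (hn : n ≤ 2 * h + 2)
    (hc : 2 ≤ c) :
    ∃ K0 : ℕ, ∀ K : ℕ, K0 ≤ K → c ^ 2 ∣ (c + 2) * K →
      Nonempty (MVCode n (n - 1) (c + 1) 2 h K (2 ^ ((c + 2) * K / c ^ 2))) := by
  obtain ⟨d, rfl⟩ := Nat.exists_eq_add_of_le' hc
  obtain ⟨t, e, ht, het, htk, hrate, hdvd⟩ := exists_rate_parameters d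
  refine ⟨(d * t + e) * (2 ^ n * t), fun K hK hcK => ?_⟩
  obtain ⟨u, rfl⟩ := hdvd K hcK
  have hu : 2 ^ n * t ≤ u := Nat.le_of_mul_le_mul_left hK (ht.trans_le htk)
  have hu0 : u ≠ 0 := ((by positivity : 0 < 2 ^ n * t).trans_le hu).ne'
  have hexp : (d + 2 + 2) * ((d * t + e) * u) / (d + 2) ^ 2 = u * t := by
    rw [← mul_assoc, hrate, mul_assoc, Nat.mul_div_cancel_left _ (by positivity), mul_comm]
  let _ : Fintype (GaloisField 2 u) := Fintype.ofFinite _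
  have hcard : Fintype.card (GaloisField 2 u) = 2 ^ u := by
    rw [← Nat.card_eq_fintype_card, GaloisField.card 2 u hu0]
  apply MVCode.nonempty_of_card_field (GaloisField 2 u) hh hn ht het htk
  · exact hcard ▸ hu.trans_lt u.lt_two_pow_self
  · rw [hcard, ← pow_mul, mul_comm u]
  · rw [hcard, ← pow_mul, hexp]

/-- Construction 1: for `n ≥ 4` even, `ν = 2`, `c_W = n-1`,
`h = n/2 - 1`, `2 ≤ c_R ≤ n-1` and `c := c_R - 1 ≥ 2`, there is `K₀` such that for all
`K ≥ K₀` with `c² ∣ (c+2)K` there exists an `(n, n-1, c_R, 2, n/2-1, 2^K, q)`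
multi-version code with side information with storage cost `log₂ q = (c+2)K/c²`. -/
theorem construction_one (n cR c : ℕ) [NeZero n] (hn : 4 ≤ n) (heven : Even n)
    (hcR2 : 2 ≤ cR) (hcRn : cR ≤ n - 1) (hc : c = cR - 1) (hc2 : 2 ≤ c) :
    ∃ K0 : ℕ, ∀ K : ℕ, K0 ≤ K → c ^ 2 ∣ (c + 2) * K →
      Nonempty (MVCode n (n - 1) cR 2 (n / 2 - 1) K (2 ^ ((c + 2) * K / c ^ 2))) := by
  obtain rfl : cR = c + 1 := by omega
  obtain ⟨m, rfl⟩ := heven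
  exact construction_one_general _ _ c (by omega) (by omega) hc2
end

section
/- Let n ≥ 4 be even, c_W = n−1, h = n/2 − 1, let ν ≥ 2, and let c_R be an integer with 2 ≤ c_R ≤ n−1; set c := c_W + c_R − n = c_R − 1 and assume c ≥ 2ν − 1. Then there exists K_0 such that for every K ≥ K_0 with (c − 2(ν−1)) dividing K, there exists an (n, n−1, c_R, ν, n/2−1, 2^K, q) multi-version code with side information whose storage cost is log₂ q = K/(c − 2(ν−1)) bits (this is the cost of Construction 2, in which server i stores K/(c−2(ν−1)) bits of the single version L_{S(i)} := max{u ∈ S(i) : |A_S(u) ∩ H_i| ≥ n−2} and nothing of any other version). -/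
open Finset

/-!
A server keeps only the versions it received that might be complete for all it can see, and stores
its symbol of an MDS encoding of the latest of them. A server that received the latest complete
version `L` can be led astray only by a later, incomplete version `u`. Such a `u` looks complete to
`i` only if at least `c_W - |A(u)|` of the servers lacking `u` lie outside `H_i`. Every server is
outside exactly `n - (2h + 1)` neighborhoods, so counting pairs bounds the number of servers
deceived by `u`, and among any `c_R` servers enough of them store `L` to recover it.
-/

/-- A code of dimension `k` is *maximum distance separable* when any `k` of its symbols determine
the message; `code i w` is the `i`-th symbol of the codeword of `w`. The usual equality between the
number of messages and the `k`-th power of the alphabet size is not imposed. -/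
def IsMDSCode {ι M A : Type*} (k : ℕ) (code : ι → M → A) : Prop :=
  ∀ ⦃G : Finset ι⦄, k ≤ #G → ∀ ⦃w w' : M⦄, (∀ i ∈ G, code i w = code i w') → w = w'

theorem IsMDSCode.comp_injective {ι M M' A A' : Type*} {k : ℕ} {code : ι → M → A}
    (hcode : IsMDSCode k code) {f : M' → M} {g : A → A'} (hf : f.Injective) (hg : g.Injective) :
    IsMDSCode k fun i w => g (code i (f w)) :=
  fun _ hG _ _ h => hf (hcode hG fun i hi => hg (h i hi))

theorem isMDSCode_eval {ι F : Type*} [Field F] (x : ι ↪ F) (k : ℕ) :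
    IsMDSCode k fun i (p : Polynomial.degreeLT F k) => (p : Polynomial F).eval (x i) := by
  intro G hG p p' h
  have degree_lt (p : Polynomial.degreeLT F k) : (p : Polynomial F).degree < #(G.map x) := by
    rw [card_map]
    exact (Polynomial.mem_degreeLT.1 p.2).trans_le (mod_cast hG)
  refine Subtype.ext (Polynomial.eq_of_degrees_lt_of_eval_finset_eq (G.map x) (degree_lt p)
    (degree_lt p') ?_)
  simpa only [forall_mem_map] using h

theorem exists_isMDSCode {ι : Type*} [Fintype ι] (k : ℕ) {m : ℕ} (hm : Fintype.card ι ≤ 2 ^ m) :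
    ∃ code : ι → (Fin (k * m) → Bool) → Fin (2 ^ m), IsMDSCode k code := by
  obtain rfl | hm0 := eq_or_ne m 0
  · exact ⟨fun _ _ => 0, fun _ _ _ _ _ => funext fun i => i.elim0⟩
  let F := GaloisField 2 m
  have : Fintype F := Fintype.ofFinite F
  have hF : Fintype.card F = 2 ^ m := by
    rw [← Nat.card_eq_fintype_card, GaloisField.card 2 m hm0]
  have hmessages : Fintype.card (Fin (k * m) → Bool) = Fintype.card (Fin k → F) := by
    simp only [Fintype.card_fun, Fintype.card_bool, Fintype.card_fin, hF, ← pow_mul, mul_comm]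
  obtain ⟨x⟩ : Nonempty (ι ↪ F) := Function.Embedding.nonempty_of_card_le (hm.trans_eq hF.symm)
  let toPoly : (Fin (k * m) → Bool) ≃ Polynomial.degreeLT F k :=
    (Fintype.equivOfCardEq hmessages).trans (Polynomial.degreeLTEquiv F k).symm.toEquiv
  exact ⟨_, (isMDSCode_eval x k).comp_injective toPoly.injective
    (Fintype.equivFinOfCardEq hF).injective⟩

section Neighborhood

variable {n h : ℕ}

theorem self_mem_nbhd (i : ZMod n) : i ∈ nbhd n h i :=
  mem_image.2 ⟨0, by simp, by simp⟩

theorem mem_nbhd_comm {i j : ZMod n} : j ∈ nbhd n h i ↔ i ∈ nbhd n h j := by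
  suffices ∀ i j : ZMod n, j ∈ nbhd n h i → i ∈ nbhd n h j from ⟨this i j, this j i⟩
  intro i j hj
  obtain ⟨d, hd, rfl⟩ := mem_image.1 hj
  rw [mem_Icc] at hd
  exact mem_image.2 ⟨-d, mem_Icc.2 (by omega), by simp⟩

theorem card_nbhd (hh : 2 * h + 1 ≤ n) (i : ZMod n) : #(nbhd n h i) = 2 * h + 1 := by
  rw [nbhd, card_image_of_injOn, Int.card_Icc]
  · omega
  intro d hd e he hde
  rw [coe_Icc, Set.mem_Icc] at hd he
  have hdvd : (n : ℤ) ∣ e - d := (ZMod.intCast_eq_intCast_iff_dvd_sub d e n).1 (add_left_cancel hde)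
  have hzero : e - d = 0 := Int.eq_zero_of_abs_lt_dvd hdvd (abs_lt.2 (by omega))
  omega

theorem card_filter_notMem_nbhd [NeZero n] (hh : 2 * h + 1 ≤ n) (j : ZMod n) :
    #{i | j ∉ nbhd n h i} = n - (2 * h + 1) := by
  have : ({i | j ∉ nbhd n h i} : Finset (ZMod n)) = (nbhd n h j)ᶜ := by
    ext i
    simp only [mem_filter, mem_univ, true_and, mem_compl, mem_nbhd_comm]
  rw [this, card_compl, ZMod.card, card_nbhd hh]

end Neighborhood

namespace MVCode

variable {n ν : ℕ} [NeZero n]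

/-- The complete versions of a state, for the write quorum `cW`. -/
def completeVersions (cW : ℕ) (S : ZMod n → Finset (Fin ν)) : Finset (Fin ν) :=
  {u | cW ≤ #(received n ν S u)}

/-- The versions received by server `i` that would be complete if every server outside its
neighborhood had received them. For `n` even, `cW = n - 1` and `h = n / 2 - 1` a single server lies
outside, and the condition becomes `n - 2 ≤ |A_S(u) ∩ H_i|`. -/
noncomputable def candidates (cW h : ℕ) (S : ZMod n → Finset (Fin ν)) (i : ZMod n) :
    Finset (Fin ν) :=
  {u ∈ S i | cW ≤ #(received n ν S u ∪ (nbhd n h i)ᶜ)}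

variable {cW h : ℕ} {S S' : ZMod n → Finset (Fin ν)} {i : ZMod n} {u L : Fin ν}

theorem mem_received {j : ZMod n} : j ∈ received n ν S u ↔ u ∈ S j := by
  simp only [received, mem_filter, mem_univ, true_and]

theorem mem_completeVersions : u ∈ completeVersions cW S ↔ cW ≤ #(received n ν S u) := by
  simp only [completeVersions, mem_filter, mem_univ, true_and]

theorem mem_candidates :
    u ∈ candidates cW h S i ↔ u ∈ S i ∧ cW ≤ #(received n ν S u ∪ (nbhd n h i)ᶜ) :=
  mem_filter

theorem candidates_congr (hS : ∀ j ∈ nbhd n h i, S j = S' j) :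
    candidates cW h S i = candidates cW h S' i := by
  have hunion (u : Fin ν) :
      received n ν S u ∪ (nbhd n h i)ᶜ = received n ν S' u ∪ (nbhd n h i)ᶜ := by
    ext j
    by_cases hj : j ∈ nbhd n h i
    · simp only [mem_union, mem_received, hS j hj]
    · simp only [mem_union, mem_compl, hj, not_false_eq_true, or_true]
  simp only [candidates, hS i (self_mem_nbhd i), hunion]

theorem mem_candidates_of_mem_completeVersions (hu : u ∈ completeVersions cW S) (hi : u ∈ S i) :
    u ∈ candidates cW h S i :=
  mem_candidates.2 ⟨hi, (mem_completeVersions.1 hu).trans (card_le_card subset_union_left)⟩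

theorem sub_card_received_le_of_mem_candidates (hu : u ∈ candidates cW h S i) :
    cW - #(received n ν S u) ≤ #{j ∈ (received n ν S u)ᶜ | j ∉ nbhd n h i} := by
  have hsdiff : (received n ν S u ∪ (nbhd n h i)ᶜ) \ received n ν S u =
      {j ∈ (received n ν S u)ᶜ | j ∉ nbhd n h i} := by
    ext j
    simp only [mem_sdiff, mem_union, mem_compl, mem_filter]
    tauto
  rw [← hsdiff, card_sdiff_of_subset subset_union_left]
  exact Nat.sub_le_sub_right (mem_candidates.1 hu).2 _

theorem card_filter_mem_candidates_le (hh : 2 * h + 1 ≤ n) (hu : u ∉ completeVersions cW S) :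
    #{i | u ∈ candidates cW h S i} ≤ (n - cW + 1) * (n - (2 * h + 1)) := by
  rw [mem_completeVersions, not_le] at hu
  set deficit := cW - #(received n ν S u)
  have hdeficit_pos : 0 < deficit := Nat.sub_pos_of_lt hu
  have hcompl : #(received n ν S u)ᶜ ≤ (n - cW + 1) * deficit := by
    rw [card_compl, ZMod.card]
    calc n - #(received n ν S u) ≤ (n - cW) + deficit := by omega
      _ ≤ (n - cW) * deficit + deficit := by gcongr; exact Nat.le_mul_of_pos_right _ hdeficit_pos
      _ = (n - cW + 1) * deficit := (Nat.succ_mul _ _).symm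
  have hcount : #{i | u ∈ candidates cW h S i} * deficit ≤
      #(received n ν S u)ᶜ * (n - (2 * h + 1)) := by
    refine card_mul_le_card_mul (fun i j => j ∉ nbhd n h i) (fun i hi => ?_) (fun j _ => ?_)
    · exact sub_card_received_le_of_mem_candidates (mem_filter.1 hi).2
    · exact (card_le_card (filter_subset_filter _ (subset_univ _))).trans_eq
        (card_filter_notMem_nbhd hh j)
  refine Nat.le_of_mul_le_mul_right ?_ hdeficit_pos
  calc _ ≤ #(received n ν S u)ᶜ * (n - (2 * h + 1)) := hcount
    _ ≤ (n - cW + 1) * deficit * (n - (2 * h + 1)) := by gcongr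
    _ = (n - cW + 1) * (n - (2 * h + 1)) * deficit := Nat.mul_right_comm _ _ _

theorem max_candidates_eq_or_exists_gt (hL : L ∈ candidates cW h S i) :
    (candidates cW h S i).max = L ∨ ∃ u, L < u ∧ u ∈ candidates cW h S i := by
  obtain ⟨u, hu⟩ := max_of_mem hL
  obtain rfl | hlt := (le_max_of_eq hL hu).eq_or_lt
  · exact .inl hu
  · exact .inr ⟨u, hlt, mem_of_max hu⟩

theorem card_compl_received_add_le (hu : u ∈ completeVersions cW S) :
    #(received n ν S u)ᶜ + cW ≤ n :=
  calc #(received n ν S u)ᶜ + cW ≤ #(received n ν S u)ᶜ + #(received n ν S u) := by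
        gcongr
        exact mem_completeVersions.1 hu
    _ = n := by rw [card_compl_add_card, ZMod.card]

theorem card_le_card_filter_max_candidates_add (hh : 2 * h + 1 ≤ n)
    (hL : (completeVersions cW S).max = L) (T : Finset (ZMod n)) :
    cW + #T ≤ n + #{j ∈ T | (candidates cW h S j).max = L} +
      (n - cW + 1) * (n - (2 * h + 1)) * (ν - 1) := by
  have hLcomplete : L ∈ completeVersions cW S := mem_of_max hL
  let storing : Finset (ZMod n) := {j ∈ T | (candidates cW h S j).max = L}
  let deceived : Finset (ZMod n) := (Ioi L).biUnion fun u => {j | u ∈ candidates cW h S j}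
  have hcover : T ⊆ storing ∪ (received n ν S L)ᶜ ∪ deceived := by
    intro j hj
    simp only [storing, deceived, mem_union, mem_filter, mem_compl, mem_received, mem_biUnion,
      mem_Ioi, mem_univ, true_and]
    by_cases hLj : L ∈ S j
    · have := max_candidates_eq_or_exists_gt
        (mem_candidates_of_mem_completeVersions (h := h) hLcomplete hLj)
      tauto
    · exact .inl (.inr hLj)
  have hdeceived : #deceived ≤ (n - cW + 1) * (n - (2 * h + 1)) * (ν - 1) := by
    calc #deceived ≤ #(Ioi L) * ((n - cW + 1) * (n - (2 * h + 1))) :=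
          card_biUnion_le_card_mul _ _ _ fun u hu => card_filter_mem_candidates_le hh fun hu' =>
            (le_max_of_eq hu' hL).not_gt (mem_Ioi.1 hu)
      _ ≤ (ν - 1) * ((n - cW + 1) * (n - (2 * h + 1))) := by
          gcongr
          rw [Fin.card_Ioi]
          exact Nat.sub_le _ _
      _ = _ := Nat.mul_comm _ _
  have hcompl := card_compl_received_add_le hLcomplete
  have : #T ≤ #storing + #(received n ν S L)ᶜ + #deceived :=
    (card_le_card hcover).trans ((card_union_le _ _).trans (by gcongr; exact card_union_le _ _))
  change cW + #T ≤ n + #storing + _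
  omega

variable {K q : ℕ}

/-- The symbol stored by server `i`: its symbol of the encoding of its latest candidate version.
A server without candidates encodes an arbitrary message, which the decoder ignores. -/
noncomputable def encode (cW h : ℕ) (code : ZMod n → (Fin K → Bool) → Fin q) (i : ZMod n)
    (S : ZMod n → Finset (Fin ν)) (W : Fin ν → Fin K → Bool) : Fin q :=
  code i (((candidates cW h S i).max.map W).unbotD default)

/-- The message `w` explains, as a value of the latest complete version, the symbols read from
those servers of `T` that store this version. No message does if no version is complete. -/
def IsConsistent (cW h : ℕ) (code : ZMod n → (Fin K → Bool) → Fin q)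
    (S : ZMod n → Finset (Fin ν)) (T : Finset (ZMod n)) (X : ZMod n → Fin q)
    (w : Fin K → Bool) : Prop :=
  ∃ L : Fin ν, (completeVersions cW S).max = L ∧
    ∀ j ∈ T, (candidates cW h S j).max = L → code j w = X j

open Classical in
/-- The decoder: some message consistent with the symbols read, if there is one. -/
noncomputable def decode (cW h : ℕ) (code : ZMod n → (Fin K → Bool) → Fin q)
    (S : ZMod n → Finset (Fin ν)) (T : Finset (ZMod n)) (X : ZMod n → Fin q) :
    Option (Fin K → Bool) :=
  if hw : ∃ w, IsConsistent cW h code S T X w then some hw.choose else none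

variable {k cR : ℕ} {code : ZMod n → (Fin K → Bool) → Fin q} {T : Finset (ZMod n)}
  {W W' : Fin ν → Fin K → Bool}

theorem encode_eq_of_max_candidates_eq (hu : (candidates cW h S i).max = u) :
    encode cW h code i S W = code i (W u) := by
  rw [encode, hu, WithBot.map_coe, WithBot.unbotD_coe]

theorem encode_congr_word (hW : ∀ u ∈ S i, W u = W' u) :
    encode cW h code i S W = encode cW h code i S W' := by
  obtain hempty | ⟨u, hu⟩ := (candidates cW h S i).eq_empty_or_nonempty
  · simp only [encode, hempty, max_empty, WithBot.map_bot]
  · obtain ⟨L, hL⟩ := max_of_mem hu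
    rw [encode_eq_of_max_candidates_eq hL, encode_eq_of_max_candidates_eq hL,
      hW L (mem_candidates.1 (mem_of_max hL)).1]

theorem isConsistent_congr {X X' : ZMod n → Fin q} (hX : ∀ j ∈ T, X j = X' j) :
    IsConsistent cW h code S T X = IsConsistent cW h code S T X' := by
  funext w
  simp +contextual only [IsConsistent, hX]

theorem decode_congr {X X' : ZMod n → Fin q} (hX : ∀ j ∈ T, X j = X' j) :
    decode cW h code S T X = decode cW h code S T X' := by
  unfold decode
  rw [isConsistent_congr hX]

theorem decode_eq_some {X : ZMod n → Fin q} {v : Fin K → Bool}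
    (hv : ∀ w, IsConsistent cW h code S T X w ↔ w = v) : decode cW h code S T X = some v := by
  have hw : ∃ w, IsConsistent cW h code S T X w := ⟨v, (hv v).2 rfl⟩
  rw [decode, dif_pos hw, (hv _).1 hw.choose_spec]

theorem isConsistent_encode_iff (hcode : IsMDSCode k code) (hh : 2 * h + 1 ≤ n)
    (hk : n + (n - cW + 1) * (n - (2 * h + 1)) * (ν - 1) + k ≤ cW + #T)
    (hL : (completeVersions cW S).max = L) {w : Fin K → Bool} :
    IsConsistent cW h code S T (fun j => encode cW h code j S W) w ↔ w = W L := by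
  constructor
  · rintro ⟨L', hL', hw⟩
    obtain rfl : L = L' := WithBot.coe_injective (hL.symm.trans hL')
    have hcard : k ≤ #{j ∈ T | (candidates cW h S j).max = L} := by
      have := card_le_card_filter_max_candidates_add hh hL T
      omega
    refine hcode hcard fun j hj => ?_
    obtain ⟨hjT, hjL⟩ := mem_filter.1 hj
    exact (hw j hjT hjL).trans (encode_eq_of_max_candidates_eq hjL)
  · rintro rfl
    exact ⟨L, hL, fun j _ hjL => (encode_eq_of_max_candidates_eq hjL).symm⟩

/-- The multi-version code in which every server applies an MDS code of dimension `k` to its latest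
candidate version. For each version later than the latest complete one, up to
`(n - cW + 1) * (n - (2 * h + 1))` servers may be lost to the decoder. -/
noncomputable def ofMDSCode (hcode : IsMDSCode k code) (hh : 2 * h + 1 ≤ n)
    (hk : n + (n - cW + 1) * (n - (2 * h + 1)) * (ν - 1) + k ≤ cW + cR) :
    MVCode n cW cR ν h K q where
  enc := encode cW h code
  dec := decode cW h code
  enc_local_state i S S' W hS := by rw [encode, encode, candidates_congr hS]
  enc_local_word i S W W' hW := encode_congr_word hW
  dec_local S T X X' hX := decode_congr hX
  dec_correct := by
    rintro S W T rfl ⟨u, hu⟩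
    obtain ⟨L, hL⟩ := max_of_mem (mem_completeVersions.2 hu)
    exact ⟨L, fun v hv => le_max_of_eq (mem_completeVersions.2 hv) hL,
      decode_eq_some fun _ => isConsistent_encode_iff hcode hh hk hL⟩
  dec_null S W T _ hS := by
    refine dif_neg ?_
    rintro ⟨w, L, hL, -⟩
    exact (hS L).not_ge (mem_completeVersions.1 (mem_of_max hL))

end MVCode

theorem construction_two_general (n cW cR ν h k : ℕ) [NeZero n] (hh : 2 * h + 1 ≤ n) (hk : 0 < k)
    (hc : n + (n - cW + 1) * (n - (2 * h + 1)) * (ν - 1) + k ≤ cW + cR) :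
    ∃ K0 : ℕ, ∀ K : ℕ, K0 ≤ K → k ∣ K → Nonempty (MVCode n cW cR ν h K (2 ^ (K / k))) := by
  refine ⟨k * n, ?_⟩
  rintro _ hK ⟨m, rfl⟩
  have hm : Fintype.card (ZMod n) ≤ 2 ^ m := by
    rw [ZMod.card]
    exact (Nat.le_of_mul_le_mul_left hK hk).trans Nat.lt_two_pow_self.le
  obtain ⟨code, hcode⟩ := exists_isMDSCode k hm
  rw [Nat.mul_div_cancel_left m hk]
  exact ⟨MVCode.ofMDSCode hcode hh hc⟩

/-- Construction 2: for `n ≥ 4` even, `c_W = n-1`, `h = n/2 - 1`,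
`ν ≥ 2`, `2 ≤ c_R ≤ n-1` and `c := c_R - 1 ≥ 2ν - 1`, there is `K₀` such that for all
`K ≥ K₀` with `(c - 2(ν-1)) ∣ K` there exists an `(n, n-1, c_R, ν, n/2-1, 2^K, q)`
multi-version code with side information with storage cost `log₂ q = K/(c - 2(ν-1))`. -/
theorem construction_two (n cR ν c : ℕ) [NeZero n] (hn : 4 ≤ n) (heven : Even n)
    (hν : 2 ≤ ν) (hcR2 : 2 ≤ cR) (hcRn : cR ≤ n - 1) (hc : c = cR - 1)
    (hcν : 2 * ν - 1 ≤ c) :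
    ∃ K0 : ℕ, ∀ K : ℕ, K0 ≤ K → (c - 2 * (ν - 1)) ∣ K →
      Nonempty (MVCode n (n - 1) cR ν (n / 2 - 1) K (2 ^ (K / (c - 2 * (ν - 1))))) := by
  have hcompl : n - (2 * (n / 2 - 1) + 1) = 1 := by have := heven.two_dvd; omega
  have hexcess : n - (n - 1) + 1 = 2 := by omega
  exact construction_two_general n (n - 1) cR ν (n / 2 - 1) (c - 2 * (ν - 1)) (by omega)
    (by omega) (by rw [hcompl, hexcess]; omega)
end

section
/- Let n ≥ 4 be even, let ν and c_R be positive integers with c_R ≤ n−1, and for each i ∈ Z_n let H_i = Z_n \ {i + n/2}. Let S : Z_n → P({1,…,ν}) be a system state, write A(u) = {i ∈ Z_n : u ∈ S(i)}, and suppose some version L ∈ {1,…,ν} satisfies |A(L)| ≥ n−1 while every version u with u > L satisfies |A(u)| ≤ n−2. For a server i with {u ∈ S(i) : |A(u) ∩ H_i| ≥ n−2} nonempty, define L_i = max{u ∈ S(i) : |A(u) ∩ H_i| ≥ n−2}. Then for every subset T ⊆ Z_n with |T| = c_R, the number of servers i ∈ T for which L_i is defined and equals L is at least (c_R − 1) −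 2(ν − 1). -/
open Finset

/-!
A contacted server `i` can fail to single out `L` for only two reasons: it missed `L`, or it sees
some later version `u > L` as almost complete. Completeness of `L` bounds the number of servers of
the first kind. For the second kind, `A u` lies below the completeness threshold, so `u` looks
almost complete to `i` only if `A u` falls short by exactly one and the single server outside `H i`
is itself one of those missing `u`. Distinct servers have distinct antipodes, so each later version
misleads at most as many servers as miss it.
-/

theorem le_card_erase_iff {β : Type*} [DecidableEq β] {A : Finset β} {k : ℕ} (hA : #A ≤ k)
    (x : β) : k ≤ #(A.erase x) ↔ #A = k ∧ x ∉ A := by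
  by_cases hx : x ∈ A
  · have := card_erase_lt_of_mem hx
    simp only [hx, not_true_eq_false, and_false, iff_false]
    omega
  · simp only [erase_eq_of_notMem hx, hx, not_false_eq_true, and_true]
    omega

theorem card_filter_le_card_erase_le {ι β : Type*} [Fintype ι] [Fintype β] [DecidableEq β]
    {a : ι → β} (ha : Function.Injective a) {A : Finset β} {k : ℕ} (hA : #A ≤ k) :
    #{i | k ≤ #(A.erase (a i))} ≤ Fintype.card β - k := by
  simp only [le_card_erase_iff hA]
  by_cases hk : #A = k
  · calc #{i | #A = k ∧ a i ∉ A} ≤ #Aᶜ :=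
          card_le_card_of_injOn a (fun i hi => by simp_all) ha.injOn
      _ = Fintype.card β - k := by rw [card_compl, hk]
  · simp [hk]

theorem max_eq_coe_iff_isGreatest {α : Type*} [LinearOrder α] {s : Finset α} {x : α} :
    s.max = x ↔ IsGreatest (s : Set α) x :=
  ⟨fun h => ⟨mem_of_max h, fun _ hy => le_max_of_eq hy h⟩,
    fun h => le_antisymm (Finset.max_le fun _ hy => WithBot.coe_le_coe.2 (h.2 hy)) (le_max h.1)⟩

section VersionedServers

variable {V α : Type*} [Fintype V]

/-- The set `A u` of servers that received version `u` in the system state `S`. -/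
def holders [DecidableEq α] (S : V → Finset α) (u : α) : Finset V :=
  {i | u ∈ S i}

theorem mem_holders [DecidableEq α] {S : V → Finset α} {u : α} {i : V} :
    i ∈ holders S u ↔ u ∈ S i := by
  simp [holders]

variable [DecidableEq V] [LinearOrder α]

/-- The locally-latest almost-complete version `L_i` of server `i`: the greatest version received
by `i` that at least `k` servers of its neighborhood received, or `⊥` if there is none. The
neighborhood is encoded by the only server `a i` outside it, so `H i = univ.erase (a i)`. -/
def localLatest (S : V → Finset α) (a : V → V) (k : ℕ) (i : V) : WithBot α :=
  ({u ∈ S i | k ≤ #((holders S u).erase (a i))} : Finset α).max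

variable {S : V → Finset α} {a : V → V} {k : ℕ} {i : V} {L : α}

theorem localLatest_eq_coe_iff :
    localLatest S a k i = L ↔ L ∈ S i ∧ k ≤ #((holders S L).erase (a i)) ∧
      ∀ u ∈ S i, k ≤ #((holders S u).erase (a i)) → u ≤ L := by
  simp only [localLatest, max_eq_coe_iff_isGreatest, IsGreatest, mem_upperBounds, mem_coe,
    mem_filter, and_imp, and_assoc]

theorem localLatest_eq_coe_of_complete (hL : k + 1 ≤ #(holders S L)) (hi : L ∈ S i)
    (hlater : ∀ u, L < u → #((holders S u).erase (a i)) < k) :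
    localLatest S a k i = L := by
  have seen : k ≤ #((holders S L).erase (a i)) :=
    (Nat.le_sub_one_of_lt hL).trans pred_card_le_card_erase
  exact localLatest_eq_coe_iff.2
    ⟨hi, seen, fun u _ hu => not_lt.1 fun hLu => (hlater u hLu).not_ge hu⟩

variable [LocallyFiniteOrderTop α]

theorem subset_localLatest_union (hL : k + 1 ≤ #(holders S L)) (T : Finset V) :
    T ⊆ {i ∈ T | localLatest S a k i = L} ∪
      ((holders S L)ᶜ ∪ (Ioi L).biUnion fun u => {i | k ≤ #((holders S u).erase (a i))}) := by
  intro i hiT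
  by_contra hi
  simp only [mem_union, mem_filter, hiT, true_and, mem_compl, mem_biUnion, mem_Ioi, mem_univ,
    mem_holders, not_or, not_not, not_exists, not_and, not_le] at hi
  obtain ⟨hne, hiL, hlater⟩ := hi
  exact hne (localLatest_eq_coe_of_complete hL hiL hlater)

/-- Here `k + 1` plays the role of `c_W` and `m` that of `n - c_W`; Construction 2 has `m = 1`. -/
theorem construction_two_counting_general {m : ℕ} (ha : Function.Injective a)
    (hV : Fintype.card V ≤ k + 1 + m) (hL : k + 1 ≤ #(holders S L))
    (hlater : ∀ u, L < u → #(holders S u) ≤ k) (T : Finset V) :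
    #T ≤ #{i ∈ T | localLatest S a k i = L} + (m + #(Ioi L) * (m + 1)) := by
  have missing : #(holders S L)ᶜ ≤ m := by
    rw [card_compl]
    omega
  have misled : #((Ioi L).biUnion fun u => {i | k ≤ #((holders S u).erase (a i))}) ≤
      #(Ioi L) * (m + 1) :=
    card_biUnion_le_card_mul _ _ _ fun u hu =>
      (card_filter_le_card_erase_le ha (hlater u (mem_Ioi.1 hu))).trans (by omega)
  have cover := card_le_card (subset_localLatest_union (a := a) hL T)
  grw [cover, card_union_le, card_union_le, missing, misled]

end VersionedServers

/-- key counting step for Construction 2: let `n ≥ 4` be even,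
`c_R ≤ n-1`, and `H_i = ZMod n \ {i + n/2}`. Let `S` be a system state with version
sets `A(u) = {i : u ∈ S i}`, and suppose version `L` satisfies `|A(L)| ≥ n-1` while
every later version `u > L` satisfies `|A(u)| ≤ n-2`. For a server `i`, say `L_i` is
defined and equals `L` if `L ∈ S i`, `|A(L) ∩ H_i| ≥ n-2`, and every `u ∈ S i` with
`|A(u) ∩ H_i| ≥ n-2` satisfies `u ≤ L`. Then in every set `T` of `c_R` servers, at
least `(c_R - 1) - 2(ν - 1)` servers have `L_i` defined and equal to `L`. -/
theorem construction_two_counting (n ν cR : ℕ) [NeZero n] (hn : 4 ≤ n)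
    (heven : Even n) (hν : 0 < ν) (hcR0 : 0 < cR) (hcRn : cR ≤ n - 1)
    (S : ZMod n → Finset (Fin ν)) (L : Fin ν)
    (hL : n - 1 ≤ (Finset.univ.filter (fun j : ZMod n => L ∈ S j)).card)
    (hlater : ∀ u : Fin ν, L < u →
      (Finset.univ.filter (fun j : ZMod n => u ∈ S j)).card ≤ n - 2)
    (T : Finset (ZMod n)) (hT : T.card = cR) :
    (cR - 1) - 2 * (ν - 1) ≤
      (T.filter (fun i : ZMod n =>
        L ∈ S i ∧
        n - 2 ≤ ((Finset.univ.filter (fun j : ZMod n => L ∈ S j)) ∩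
            (Finset.univ.erase (i + ((n / 2 : ℕ) : ZMod n)))).card ∧
        ∀ u ∈ S i,
          n - 2 ≤ ((Finset.univ.filter (fun j : ZMod n => u ∈ S j)) ∩
              (Finset.univ.erase (i + ((n / 2 : ℕ) : ZMod n)))).card → u ≤ L)).card := by
  have count := construction_two_counting_general (k := n - 2) (m := 1)
    (add_left_injective ((n / 2 : ℕ) : ZMod n)) (by rw [ZMod.card]; omega)
    (le_trans (by omega) hL) hlater T
  simp only [inter_erase, inter_univ, localLatest_eq_coe_iff, holders, Fin.card_Ioi, hT] at count ⊢
  omega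
end

section
/- Let K, q, c be positive integers with c ≥ 2. Suppose there exist functions a_1, …, a_{c−1} : {0,1}^K × {0,1}^K → Fin q, b : {0,1}^K × {0,1}^K → Fin q, y_1, …, y_{c−2} : {0,1}^K × {0,1}^K → Fin q, z : {0,1}^K → Fin q, and decoders D : (Fin q)^c → {0,1}^K and D' : (Fin q)^c → {0,1}^K such that for all w_1, w_2 ∈ {0,1}^K: D(a_1(w_1,w_2), …, a_{c−1}(w_1,w_2), b(w_1,w_2)) = w_2 and D'(y_1(w_1,w_2), …, y_{c−2}(w_1,w_2), b(w_1,w_2), z(w_1)) = w_1. Then q^{2c−1} ≥ 2^{2K}. -/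
/-! The symbol `b` serves both decoders, so it has to be counted only once: the pair `(w₁, w₂)` is
recovered from the `c - 1` symbols `a`, the `c - 2` symbols `y`, `b` and `z`, which are `2c - 1`
symbols rather than the `2c` read by the two decoders separately. -/

section Decoders

variable {W₁ W₂ A B Y : Type*} {a : W₁ × W₂ → A} {b : W₁ × W₂ → B} {y : W₁ × W₂ → Y}
  {D : A → B → W₂} {D' : Y → B → W₁}

theorem leftInverse_decoders_of_shared (hD : ∀ w, D (a w) (b w) = w.2)
    (hD' : ∀ w, D' (y w) (b w) = w.1) :
    Function.LeftInverse (fun s : A × Y × B => (D' s.2.1 s.2.2, D s.1 s.2.2))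
      (fun w => (a w, y w, b w)) :=
  fun w => Prod.ext (hD' w) (hD w)

theorem card_mul_card_le_of_shared [Finite A] [Finite B] [Finite Y]
    (hD : ∀ w, D (a w) (b w) = w.2) (hD' : ∀ w, D' (y w) (b w) = w.1) :
    Nat.card W₁ * Nat.card W₂ ≤ Nat.card A * (Nat.card Y * Nat.card B) := by
  simpa only [Nat.card_prod] using
    Nat.card_le_card_of_injective _ (leftInverse_decoders_of_shared hD hD').injective

end Decoders

theorem two_state_argument_general {W₁ W₂ Q ι κ : Type*} [Finite Q] [Finite ι] [Finite κ]
    (a : ι → W₁ × W₂ → Q) (b : W₁ × W₂ → Q) (y : κ → W₁ × W₂ → Q) (z : W₁ × W₂ → Q)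
    (D : (ι → Q) → Q → W₂) (D' : (κ → Q) → Q → Q → W₁)
    (hD : ∀ w₁ w₂, D (fun j => a j (w₁, w₂)) (b (w₁, w₂)) = w₂)
    (hD' : ∀ w₁ w₂, D' (fun j => y j (w₁, w₂)) (b (w₁, w₂)) (z (w₁, w₂)) = w₁) :
    Nat.card W₁ * Nat.card W₂ ≤ Nat.card Q ^ (Nat.card ι + Nat.card κ + 2) :=
  calc
    Nat.card W₁ * Nat.card W₂
      ≤ Nat.card (ι → Q) * (Nat.card ((κ → Q) × Q) * Nat.card Q) :=
        card_mul_card_le_of_shared (a := fun w j => a j w) (y := fun w => (fun j => y j w, z w))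
          (D' := fun s t => D' s.1 t s.2) (fun w => hD w.1 w.2) (fun w => hD' w.1 w.2)
    _ = Nat.card Q ^ (Nat.card ι + Nat.card κ + 2) := by
        rw [Nat.card_prod, Nat.card_fun, Nat.card_fun]
        ring

/-- two-state argument for Theorem 3: suppose the later version `w₂`
is decodable by `D` from `c-1` symbols `a_j(w₁,w₂)` together with a shared symbol
`b(w₁,w₂)`, and the earlier version `w₁` is decodable by `D'` from `c-2` symbols
`y_j(w₁,w₂)`, the shared symbol `b(w₁,w₂)`, and one symbol `z(w₁)` depending only on
`w₁`, all symbols taken from an alphabet of size `q`. Then `q^(2c-1) ≥ 2^(2K)`,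
i.e. `(2c-1)·log₂ q ≥ 2K`. -/
theorem two_state_argument (K q c : ℕ) (hK : 0 < K) (hq : 0 < q) (hc : 2 ≤ c)
    (a : Fin (c - 1) → (Fin K → Bool) × (Fin K → Bool) → Fin q)
    (b : (Fin K → Bool) × (Fin K → Bool) → Fin q)
    (y : Fin (c - 2) → (Fin K → Bool) × (Fin K → Bool) → Fin q)
    (z : (Fin K → Bool) → Fin q)
    (D : (Fin (c - 1) → Fin q) → Fin q → (Fin K → Bool))
    (D' : (Fin (c - 2) → Fin q) → Fin q → Fin q → (Fin K → Bool))
    (hD : ∀ w₁ w₂ : Fin K → Bool, D (fun j => a j (w₁, w₂)) (b (w₁, w₂)) = w₂)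
    (hD' : ∀ w₁ w₂ : Fin K → Bool,
      D' (fun j => y j (w₁, w₂)) (b (w₁, w₂)) (z w₁) = w₁) :
    2 ^ (2 * K) ≤ q ^ (2 * c - 1) := by
  have exponent_eq : c - 1 + (c - 2) + 2 = 2 * c - 1 := by omega
  simpa [← pow_add, ← two_mul, exponent_eq] using
    two_state_argument_general a b y (fun w => z w.1) D D' hD hD'
end
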